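/- arXiv:1610.00570 — 2 statements merged into one kernel-verified Lean document; each statement's English description precedes it below -/
import Mathlib

section
/- Let s ≠ t be elements of F such that the quadratic forms Q_s = Q + s·l² and Q_t = Q + t·l² both have Witt index n, let A be a relative hemisystem of the elliptic quadric defined by Q_s with respect to 𝒬, let A' be a relative hemisystem of the elliptic quadric defined by Q_t with respect to 𝒬, and set X = A ∪ A' ∪ 𝒬. Then every hyperplane of V (subspace of dimension 2n+1) contains either (q^{2n} − 1)/(q − 1) or (q^{2n} − 1)/(q − 1) − qⁿ points of X; that is, X is a two-character set with the same hyperplane intersection numbers as an elliptic quadric Q⁻(2n+1,q) (an elliptic quasi-quadric). -/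
noncomputable section

open Module

variable {F V : Type*} [Field F] [AddCommGroup V] [Module F V]

/-- `P` is a singular point of the quadratic form `Q`, i.e. a `1`-dimensional subspace
spanned by a nonzero singular vector. -/
def IsSingularPoint (Q : QuadraticForm F V) (P : Submodule F V) : Prop :=
  ∃ v : V, v ≠ 0 ∧ Q v = 0 ∧ P = Submodule.span F {v}

/-- A subspace is totally singular if `Q` vanishes identically on it. -/
def TotallySingular (Q : QuadraticForm F V) (W : Submodule F V) : Prop :=
  ∀ v ∈ W, Q v = 0

/-- A generator is a totally singular subspace of (vector space) dimension `n`. -/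
def IsGenerator (Q : QuadraticForm F V) (n : ℕ) (g : Submodule F V) : Prop :=
  TotallySingular Q g ∧ finrank F g = n

/-- The restriction of `Q` to the subspace `U` is nondegenerate. -/
def NondegOn (Q : QuadraticForm F V) (U : Submodule F V) : Prop :=
  ∀ v ∈ U, Q v = 0 → (∀ w ∈ U, QuadraticMap.polar (⇑Q) v w = 0) → v = 0

/-- The quadratic form `Q` is nondegenerate. -/
def Nondeg (Q : QuadraticForm F V) : Prop :=
  ∀ v : V, Q v = 0 → (∀ w : V, QuadraticMap.polar (⇑Q) v w = 0) → v = 0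

/-- `Q` has Witt index `n`: every totally singular subspace has dimension at most `n`
and some totally singular subspace has dimension `n`. -/
def HasWittIndex (Q : QuadraticForm F V) (n : ℕ) : Prop :=
  (∀ W : Submodule F V, TotallySingular Q W → finrank F W ≤ n) ∧
  ∃ W : Submodule F V, TotallySingular Q W ∧ finrank F W = n

/-- A relative `m`-ovoid with respect to the parabolic section cut out by the
hyperplane `H`: a set `R` of singular points not contained in `H` such that every
generator not contained in `H` contains exactly `m` points of `R`. -/
def IsRelativeMOvoid (Q : QuadraticForm F V) (n : ℕ) (H : Submodule F V) (m : ℕ)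
    (R : Set (Submodule F V)) : Prop :=
  (∀ P ∈ R, IsSingularPoint Q P ∧ ¬ P ≤ H) ∧
  ∀ g : Submodule F V, IsGenerator Q n g → ¬ g ≤ H → {P ∈ R | P ≤ g}.ncard = m

/-- A relative hemisystem of the elliptic quadric defined by `Q'` with respect to the
parabolic section cut out by `H`: a relative `(q^{n−1}/2)`-ovoid whose size equals the
number of `Q'`-singular points outside `H` not belonging to it. -/
def IsRelHemisystemOf (Q' : QuadraticForm F V) (q n : ℕ) (H : Submodule F V)
    (R : Set (Submodule F V)) : Prop :=
  IsRelativeMOvoid Q' n H (q ^ (n - 1) / 2) R ∧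
  R.ncard = {P : Submodule F V | IsSingularPoint Q' P ∧ ¬ P ≤ H ∧ P ∉ R}.ncard

/-!
Give a singular vector of `Q_s` the weight `1` if it lies in `H = ker l`, `2` if it spans a point
of `A`, and `0` otherwise. Every generator then has the same total weight `κ = qⁿ`.

For any function `f` whose sum over each generator is `κ`, let `f(W)` be the sum of `f` over the
singular vectors in `W`. Every point `p` of the elliptic quadric space satisfies
`f(p^⊥) + qⁿ f(p) = (qⁿ + 1) κ`. For singular `p` this is the case `dim U = 1` of an identity for
all totally singular `U`, proved by double counting and induction on the codimension of `U` in a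
generator. For nonsingular `p` it is the case `U = 0` of the same identity in the parabolic section
`p^⊥`, which still has Witt index `n` because every element of `F` is a square.

All forms `Q_t` share the polar form of `Q`, so `p^⊥` does not depend on `t`. The weights of `A` and
`A'` add up to `2 + 2 (q - 1) |X ∩ K|` on every subspace `K`, and adding the two identities gives
`(q - 1) (|X ∩ p^⊥| + qⁿ |X ∩ p|) = q²ⁿ - 1`. Every hyperplane is some `p^⊥`, and `|X ∩ p| ≤ 1`.
-/

open Finset Submodule QuadraticMap

section Perp

/-- The orthogonal complement `U^⊥` with respect to the polar form of `Q`. -/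
abbrev perp (Q : QuadraticForm F V) (U : Submodule F V) : Submodule F V :=
  LinearMap.BilinForm.orthogonal Q.polarBilin U

variable {Q : QuadraticForm F V} {U : Submodule F V} {p u v : V}

lemma mem_perp : v ∈ perp Q U ↔ ∀ u ∈ U, polar Q u v = 0 := Iff.rfl

lemma mem_perp_span_singleton : v ∈ perp Q (F ∙ p) ↔ polar Q p v = 0 := by
  rw [perp, LinearMap.BilinForm.orthogonal_span_singleton_eq_toLin_ker]
  rfl

lemma perp_bot (Q : QuadraticForm F V) : perp Q ⊥ = ⊤ :=
  LinearMap.BilinForm.orthogonal_bot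

lemma perp_sup (Q : QuadraticForm F V) (U W : Submodule F V) :
    perp Q (U ⊔ W) = perp Q U ⊓ perp Q W := by
  refine le_antisymm (le_inf (LinearMap.BilinForm.orthogonal_le le_sup_left)
    (LinearMap.BilinForm.orthogonal_le le_sup_right)) ?_
  rintro v ⟨hU, hW⟩ x hx
  obtain ⟨y, hy, z, hz, rfl⟩ := mem_sup.1 hx
  exact (polar_add_left Q y z v).trans (by rw [mem_perp.1 hU y hy, mem_perp.1 hW z hz, add_zero])

lemma mem_perp_sup_span_singleton :
    v ∈ perp Q (U ⊔ F ∙ p) ↔ v ∈ perp Q U ∧ polar Q p v = 0 := by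
  rw [perp_sup, Submodule.mem_inf, mem_perp_span_singleton]

lemma mem_sup_span_singleton_symm (hv : v ∉ U) (h : v ∈ U ⊔ F ∙ u) :
    u ∈ U ⊔ F ∙ v := by
  have := mem_span_insert_exchange (K := F) (s := (U : Set V)) (x := v) (y := u)
  simp only [span_insert, span_eq, sup_comm _ U] at this
  exact this h hv

lemma polarBilin_isRefl (Q : QuadraticForm F V) : Q.polarBilin.IsRefl :=
  fun x y h => (polar_comm Q y x).trans h

end Perp

section TotallySingular

variable {Q : QuadraticForm F V} {U : Submodule F V} {v p : V} {n : ℕ}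

lemma map_add_smul_of_polar_eq_zero (h : polar Q v p = 0) (c : F) :
    Q (v + c • p) = Q v + c * c * Q p := by
  rw [QuadraticMap.map_add Q, polar_smul_right, h, QuadraticMap.map_smul, smul_zero, add_zero,
    smul_eq_mul]

lemma totallySingular_bot (Q : QuadraticForm F V) : TotallySingular Q ⊥ := by
  rintro v hv
  rw [(mem_bot F).1 hv, QuadraticMap.map_zero]

lemma totallySingular_span_singleton (hp : Q p = 0) : TotallySingular Q (F ∙ p) := by
  intro v hv
  obtain ⟨c, rfl⟩ := mem_span_singleton.1 hv
  rw [QuadraticMap.map_smul, hp, smul_zero]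

namespace TotallySingular

lemma le_perp (hU : TotallySingular Q U) : U ≤ perp Q U := by
  intro v hv u hu
  simp [polar, hU _ hv, hU _ hu, hU _ (U.add_mem hu hv)]

lemma sup_span_singleton (hU : TotallySingular Q U) (hp : Q p = 0) (hpU : p ∈ perp Q U) :
    TotallySingular Q (U ⊔ F ∙ p) := by
  intro v hv
  obtain ⟨y, hy, z, hz, rfl⟩ := mem_sup.1 hv
  obtain ⟨c, rfl⟩ := mem_span_singleton.1 hz
  rw [map_add_smul_of_polar_eq_zero (hpU y hy), hU y hy, hp, mul_zero, add_zero]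

lemma finrank_add_finrank_perp [FiniteDimensional F V] (hQ : Nondeg Q)
    (hU : TotallySingular Q U) : finrank F U + finrank F (perp Q U) = finrank F V := by
  have hrad : U ⊓ perp Q ⊤ = ⊥ := by
    refine (Submodule.eq_bot_iff _).2 fun v hv => ?_
    exact hQ v (hU v hv.1) fun w => (polar_comm Q v w).trans (hv.2 w mem_top)
  have h := LinearMap.BilinForm.finrank_add_finrank_orthogonal (polarBilin_isRefl Q) U
  rwa [hrad, finrank_bot, add_zero] at h

end TotallySingular

lemma IsGenerator.mem_of_mem_perp [FiniteDimensional F V] (hQ : HasWittIndex Q n)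
    (hU : IsGenerator Q n U) (hv : v ∈ perp Q U) (hQv : Q v = 0) : v ∈ U := by
  by_contra hvU
  have hle := hQ.1 _ (hU.1.sup_span_singleton hQv hv)
  rw [finrank_sup_span_singleton hvU, hU.2] at hle
  exact absurd hle (by simp)

end TotallySingular

section SingularVectors

variable [Fintype V] {Q : QuadraticForm F V} {U W : Submodule F V} {v : V} {n : ℕ}

open Classical in
/-- The vectors of `U` on which `Q` vanishes, including the zero vector. -/
def singularVectors (Q : QuadraticForm F V) (U : Submodule F V) : Finset V :=
  {v | v ∈ U ∧ Q v = 0}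

@[simp] lemma mem_singularVectors : v ∈ singularVectors Q U ↔ v ∈ U ∧ Q v = 0 := by
  simp [singularVectors]

lemma singularVectors_mono (h : U ≤ W) : singularVectors Q U ⊆ singularVectors Q W :=
  fun v hv => mem_singularVectors.2 ((mem_singularVectors.1 hv).imp_left (@h v))

lemma mem_singularVectors_perp_sdiff [DecidableEq V] :
    v ∈ singularVectors Q (perp Q U) \ singularVectors Q U ↔ v ∈ perp Q U ∧ Q v = 0 ∧ v ∉ U := by
  simp only [mem_sdiff, mem_singularVectors]
  tauto

lemma IsGenerator.singularVectors_perp (hQ : HasWittIndex Q n) (hU : IsGenerator Q n U) :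
    singularVectors Q (perp Q U) = singularVectors Q U := by
  ext v
  simp only [mem_singularVectors]
  exact ⟨fun hv => ⟨hU.mem_of_mem_perp hQ hv.1 hv.2, hv.2⟩, fun hv => ⟨hU.1.le_perp hv.1, hv.2⟩⟩

end SingularVectors

section Counting

variable [Fintype F] [Fintype V] {Q : QuadraticForm F V} {U : Submodule F V} {n d j : ℕ}

lemma TotallySingular.card_singularVectors (hU : TotallySingular Q U) :
    #(singularVectors Q U) = Fintype.card F ^ finrank F U := by
  classical
  rw [← Module.card_eq_pow_finrank (V := U), Fintype.card_subtype]
  congr 1 with v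
  simpa using hU v

open Classical in
lemma card_mul_card_fiber {W : Type*} [AddCommGroup W] [Module F W] [Fintype W] {φ : W →ₗ[F] F}
    (hφ : φ ≠ 0) (c : F) : Fintype.card F * #{w | φ w = c} = Fintype.card W := by
  have hfib (b : F) : #{w | φ w = b} = #{w | φ w = c} :=
    AddMonoidHom.card_fiber_eq_of_mem_range φ
      (φ.surjective hφ b) (φ.surjective hφ c)
  calc Fintype.card F * #{w | φ w = c} = ∑ b : F, #{w | φ w = b} := by simp [hfib]
    _ = Fintype.card W := (card_eq_sum_card_fiberwise (f := φ) fun _ _ => mem_univ _).symm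

open Classical in
lemma TotallySingular.card_mul_card_fiber (hU : TotallySingular Q U) {v : V}
    (hv : v ∉ perp Q U) : Fintype.card F * #{u : U | Q (v + u) = 0} = Fintype.card U := by
  set φ : U →ₗ[F] F := (Q.polarBilin v).domRestrict U
  have hφ : φ ≠ 0 := fun h => hv fun u hu =>
    (polar_comm Q u v).trans (LinearMap.congr_fun h ⟨u, hu⟩)
  have hiff (u : U) : Q (v + u) = 0 ↔ φ u = -Q v := by
    rw [QuadraticMap.map_add Q, hU u u.2, add_zero, add_eq_zero_iff_neg_eq, eq_comm]
    rfl
  simp only [hiff]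
  exact _root_.card_mul_card_fiber hφ (-Q v)

open Classical in
lemma TotallySingular.card_mul_card_singularVectors_sdiff (hU : TotallySingular Q U) :
    Fintype.card F * #(singularVectors Q ⊤ \ singularVectors Q (perp Q U)) =
      #{v | v ∉ perp Q U} := by
  have htranslate (u : U) : #{v | v ∉ perp Q U ∧ Q (v + u) = 0} =
      #(singularVectors Q ⊤ \ singularVectors Q (perp Q U)) := by
    refine card_equiv (Equiv.addRight (u : V)) fun v => ?_
    have hmem : v + u ∈ perp Q U ↔ v ∈ perp Q U := Submodule.add_mem_iff_left _ (hU.le_perp u.2)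
    simp only [mem_filter, mem_univ, true_and, mem_sdiff, mem_singularVectors, mem_top,
      Equiv.coe_addRight, hmem]
    tauto
  have hcount := sum_card_bipartiteAbove_eq_sum_card_bipartiteBelow
    (s := {v | v ∉ perp Q U}) (t := (univ : Finset U)) fun (v : V) (u : U) => Q (v + u) = 0
  simp only [bipartiteAbove, bipartiteBelow, filter_filter, htranslate, sum_const, card_univ,
    smul_eq_mul] at hcount
  refine Nat.eq_of_mul_eq_mul_left (Fintype.card_pos (α := U)) ?_
  rw [mul_left_comm, ← hcount, mul_sum,
    sum_congr rfl fun v hv => hU.card_mul_card_fiber (mem_filter.1 hv).2]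
  simp [mul_comm]

local notation "𝔮" => (Fintype.card F : ℤ)

lemma TotallySingular.mul_card_singularVectors_sub (hU : TotallySingular Q U) :
    𝔮 * (#(singularVectors Q ⊤) - #(singularVectors Q (perp Q U))) =
      𝔮 ^ finrank F V - 𝔮 ^ finrank F (perp Q U) := by
  classical
  have hcompl : #{v | v ∉ perp Q U} + 𝔮 ^ finrank F (perp Q U) = 𝔮 ^ finrank F V := by
    have h := card_filter_add_card_filter_not (s := (univ : Finset V)) (· ∈ perp Q U)
    rw [← Fintype.card_subtype, Module.card_eq_pow_finrank (K := F) (V := perp Q U), card_univ,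
      Module.card_eq_pow_finrank (K := F) (V := V), add_comm] at h
    exact_mod_cast h
  have hsdiff := card_sdiff_add_card_eq_card (singularVectors_mono (Q := Q) (U := perp Q U) le_top)
  have hcount := hU.card_mul_card_singularVectors_sdiff
  zify at hsdiff hcount
  linear_combination hcount + hcompl - 𝔮 * hsdiff

-- Quadrics of parabolic type have `d = 0`, those of elliptic type have `d = 1`.
lemma TotallySingular.card_singularVectors_perp (hnd : Nondeg Q) (hw : HasWittIndex Q n)
    (hV : finrank F V = 2 * n + d + 1) (hU : TotallySingular Q U) (hj : finrank F U + j = n) :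
    (#(singularVectors Q (perp Q U)) : ℤ) = 𝔮 ^ n + 𝔮 ^ (n + d) * (𝔮 ^ j - 1) := by
  obtain ⟨W, hW, hWn⟩ := hw.2
  have hWcard : (#(singularVectors Q (perp Q W)) : ℤ) = 𝔮 ^ n := by
    rw [IsGenerator.singularVectors_perp hw ⟨hW, hWn⟩, hW.card_singularVectors, hWn,
      Nat.cast_pow]
  have hWdim : finrank F (perp Q W) = n + d + 1 := by
    have := hW.finrank_add_finrank_perp hnd
    lia
  have hUdim : finrank F (perp Q U) = n + d + j + 1 := by
    have := hU.finrank_add_finrank_perp hnd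
    lia
  have hWcount := hW.mul_card_singularVectors_sub
  have hUcount := hU.mul_card_singularVectors_sub
  rw [hWdim] at hWcount
  rw [hUdim] at hUcount
  refine mul_left_cancel₀ (Nat.cast_ne_zero.2 Fintype.card_ne_zero : 𝔮 ≠ 0) ?_
  linear_combination hWcount - hUcount + 𝔮 * hWcard

end Counting

section Descent

variable [Fintype V] {Q : QuadraticForm F V} {U T : Submodule F V} {n d j : ℕ} {κ : ℤ} {f : V → ℤ}

-- Double counting of the pairs `(u, x)` with `x ∈ W u`.
open Classical in
lemma sum_singularVectors_sdiff_comm (hUT : U ≤ T) (W : V → Submodule F V) (N : ℤ)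
    (hUW : ∀ u ∈ singularVectors Q T \ singularVectors Q U, U ≤ W u)
    (hWT : ∀ u ∈ singularVectors Q T \ singularVectors Q U, W u ≤ T)
    (hsymm : ∀ u ∈ singularVectors Q T \ singularVectors Q U,
      ∀ x ∈ singularVectors Q T \ singularVectors Q U, x ∈ W u → u ∈ W x)
    (hcard : ∀ u ∈ singularVectors Q T \ singularVectors Q U, #(singularVectors Q (W u)) = N) :
    ∑ u ∈ singularVectors Q T \ singularVectors Q U, ∑ x ∈ singularVectors Q (W u), f x =
      (#(singularVectors Q T) - #(singularVectors Q U)) * ∑ x ∈ singularVectors Q U, f x +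
      (N - #(singularVectors Q U)) *
        (∑ x ∈ singularVectors Q T, f x - ∑ x ∈ singularVectors Q U, f x) := by
  set C := singularVectors Q T \ singularVectors Q U with hC
  have hUT' := singularVectors_mono (Q := Q) hUT
  have hfilter (u) (hu : u ∈ C) :
      C.filter (· ∈ W u) = singularVectors Q (W u) \ singularVectors Q U := by
    ext x
    have := @hWT u hu x
    simp only [hC, mem_filter, mem_sdiff, mem_singularVectors]
    tauto
  have hsum (u) (hu : u ∈ C) : ∑ x ∈ singularVectors Q (W u), f x =
      ∑ x ∈ singularVectors Q U, f x + ∑ x ∈ C with x ∈ W u, f x := by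
    rw [hfilter u hu, add_comm, sum_sdiff (singularVectors_mono (hUW u hu))]
  have hcard' (u) (hu : u ∈ C) : (#(C.filter (· ∈ W u)) : ℤ) = N - #(singularVectors Q U) := by
    rw [hfilter u hu, cast_card_sdiff (singularVectors_mono (hUW u hu)), hcard u hu]
  have hswap : ∑ u ∈ C, ∑ x ∈ C with x ∈ W u, f x = ∑ x ∈ C, ∑ u ∈ C with u ∈ W x, f x :=
    sum_comm' fun u x => by
      have := hsymm u
      have := hsymm x
      simp only [mem_filter]
      tauto
  calc ∑ u ∈ C, ∑ x ∈ singularVectors Q (W u), f x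
      = #C * ∑ x ∈ singularVectors Q U, f x +
          ∑ x ∈ C, (N - #(singularVectors Q U)) * f x := by
        rw [sum_congr rfl hsum, sum_add_distrib, hswap, sum_const, nsmul_eq_mul]
        congr 1
        refine sum_congr rfl fun x hx => ?_
        rw [sum_const, nsmul_eq_mul, hcard' x hx]
    _ = _ := by
        rw [← mul_sum, hC, sum_sdiff_eq_sub hUT', cast_card_sdiff hUT']

lemma TotallySingular.sup_span_singleton_of_mem_sdiff [DecidableEq V] (hU : TotallySingular Q U)
    {u : V} (hu : u ∈ singularVectors Q (perp Q U) \ singularVectors Q U) :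
    TotallySingular Q (U ⊔ F ∙ u) ∧ finrank F ↥(U ⊔ F ∙ u) = finrank F U + 1 := by
  obtain ⟨hperp, hQ, huU⟩ := mem_singularVectors_perp_sdiff.1 hu
  exact ⟨hU.sup_span_singleton hQ hperp, finrank_sup_span_singleton huU⟩

variable [Fintype F]

local notation "𝔮" => (Fintype.card F : ℤ)

open Classical in
lemma TotallySingular.sum_sum_sup_span_singleton (hU : TotallySingular Q U) :
    ∑ u ∈ singularVectors Q (perp Q U) \ singularVectors Q U,
        ∑ x ∈ singularVectors Q (U ⊔ F ∙ u), f x =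
      (#(singularVectors Q (perp Q U)) - #(singularVectors Q U)) *
        ∑ x ∈ singularVectors Q U, f x +
      (𝔮 ^ (finrank F U + 1) - #(singularVectors Q U)) *
        (∑ x ∈ singularVectors Q (perp Q U), f x - ∑ x ∈ singularVectors Q U, f x) := by
  refine sum_singularVectors_sdiff_comm hU.le_perp (fun u => U ⊔ F ∙ u) _
    (fun u _ => le_sup_left) (fun u hu => ?_) (fun u _ x hx h => ?_) fun u hu => ?_
  · exact sup_le hU.le_perp
      ((span_singleton_le_iff_mem _ _).2 (mem_singularVectors_perp_sdiff.1 hu).1)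
  · exact mem_sup_span_singleton_symm (mem_singularVectors_perp_sdiff.1 hx).2.2 h
  · obtain ⟨hTS, hdim⟩ := hU.sup_span_singleton_of_mem_sdiff hu
    rw [hTS.card_singularVectors, hdim, Nat.cast_pow]

open Classical in
lemma TotallySingular.sum_sum_perp_sup_span_singleton (hnd : Nondeg Q) (hw : HasWittIndex Q n)
    (hV : finrank F V = 2 * n + d + 1) (hU : TotallySingular Q U)
    (hj : finrank F U + (j + 1) = n) :
    ∑ u ∈ singularVectors Q (perp Q U) \ singularVectors Q U,
        ∑ x ∈ singularVectors Q (perp Q (U ⊔ F ∙ u)), f x =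
      (#(singularVectors Q (perp Q U)) - #(singularVectors Q U)) *
        ∑ x ∈ singularVectors Q U, f x +
      (𝔮 ^ n + 𝔮 ^ (n + d) * (𝔮 ^ j - 1) - #(singularVectors Q U)) *
        (∑ x ∈ singularVectors Q (perp Q U), f x - ∑ x ∈ singularVectors Q U, f x) := by
  refine sum_singularVectors_sdiff_comm hU.le_perp (fun u => perp Q (U ⊔ F ∙ u)) _
    (fun u hu x hx => ?_) (fun u _ => ?_) (fun u hu x _ h => ?_) fun u hu => ?_
  · exact mem_perp_sup_span_singleton.2 ⟨hU.le_perp hx,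
      (polar_comm Q u x).trans ((mem_singularVectors_perp_sdiff.1 hu).1 x hx)⟩
  · exact LinearMap.BilinForm.orthogonal_le le_sup_left
  · exact mem_perp_sup_span_singleton.2 ⟨(mem_singularVectors_perp_sdiff.1 hu).1,
      (polar_comm Q x u).trans (mem_perp_sup_span_singleton.1 h).2⟩
  · obtain ⟨hTS, hdim⟩ := hU.sup_span_singleton_of_mem_sdiff hu
    exact hTS.card_singularVectors_perp hnd hw hV (by lia)

theorem TotallySingular.sum_singularVectors_perp (hnd : Nondeg Q) (hw : HasWittIndex Q n)
    (hV : finrank F V = 2 * n + d + 1)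
    (hf : ∀ g, IsGenerator Q n g → ∑ v ∈ singularVectors Q g, f v = κ)
    (hU : TotallySingular Q U) (hj : finrank F U + j = n) :
    ∑ v ∈ singularVectors Q (perp Q U), f v + 𝔮 ^ (j + d) * ∑ v ∈ singularVectors Q U, f v =
      (𝔮 ^ (j + d) + 1) * κ := by
  classical
  induction j generalizing U with
  | zero =>
    have hgen : IsGenerator Q n U := ⟨hU, hj⟩
    rw [hgen.singularVectors_perp hw, hf U hgen]
    ring
  | succ i ih =>
    have hsum := sum_congr rfl fun u hu =>
      have hext := hU.sup_span_singleton_of_mem_sdiff hu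
      ih hext.1 (by lia)
    rw [sum_add_distrib, ← mul_sum, hU.sum_sum_sup_span_singleton,
      hU.sum_sum_perp_sup_span_singleton hnd hw hV hj, sum_const, nsmul_eq_mul,
      cast_card_sdiff (singularVectors_mono hU.le_perp),
      hU.card_singularVectors_perp hnd hw hV hj, hU.card_singularVectors, ← hj] at hsum
    have hfactor : 𝔮 ^ finrank F U * (𝔮 ^ (i + 1) - 1) * (𝔮 ^ (i + d) + 1) ≠ 0 := by
      have hq : (1 : ℤ) < 𝔮 := by exact_mod_cast Fintype.one_lt_card
      have hpow := one_lt_pow₀ hq i.succ_ne_zero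
      exact mul_ne_zero (mul_ne_zero (by positivity) (by lia)) (by positivity)
    refine mul_left_cancel₀ hfactor ?_
    push_cast at hsum
    linear_combination hsum

end Descent

section NonsingularPoint

variable [PerfectRing F 2] {Q : QuadraticForm F V} {U : Submodule F V} {p : V} {n : ℕ}

lemma exists_map_add_smul_eq_zero {v : V} (hp : Q p ≠ 0) (hv : polar Q v p = 0) :
    ∃ c : F, Q (v + c • p) = 0 := by
  obtain ⟨c, hc : c ^ 2 = -Q v / Q p⟩ :=
    (PerfectRing.bijective_frobenius (R := F) (p := 2)).2 (-Q v / Q p)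
  refine ⟨c, ?_⟩
  rw [map_add_smul_of_polar_eq_zero hv, ← pow_two, hc, div_mul_cancel₀ _ hp, add_neg_cancel]

variable [FiniteDimensional F V] [CharP F 2]

lemma TotallySingular.exists_finrank_eq_succ (hU : TotallySingular Q U) (hpU : p ∈ perp Q U)
    (hp : Q p ≠ 0) (hdim : finrank F U + 1 < finrank F (perp Q (U ⊔ F ∙ p))) :
    ∃ W ≤ perp Q (F ∙ p), TotallySingular Q W ∧ finrank F W = finrank F U + 1 := by
  have hpolar : polar Q p p = 0 := by
    rw [polar_self, two_nsmul, CharTwo.add_self_eq_zero]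
  obtain ⟨v, hv, hvU⟩ : ∃ v ∈ perp Q (U ⊔ F ∙ p), v ∉ U ⊔ F ∙ p := by
    refine SetLike.not_le_iff_exists.1 fun hle => hdim.not_ge ?_
    rw [← finrank_sup_span_singleton fun h => hp (hU p h)]
    exact finrank_mono hle
  obtain ⟨hvU', hvp⟩ := mem_perp_sup_span_singleton.1 hv
  obtain ⟨c, hc⟩ := exists_map_add_smul_eq_zero hp ((polar_comm Q v p).trans hvp)
  have hcU : v + c • p ∈ perp Q U := add_mem hvU' (smul_mem _ c hpU)
  have hcp : v + c • p ∈ perp Q (F ∙ p) := by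
    rw [mem_perp_span_singleton, polar_add_right, polar_smul_right, hvp, hpolar, smul_zero,
      add_zero]
  have hcU' : v + c • p ∉ U := fun h => hvU <| by
    simpa using sub_mem (mem_sup_left h) (mem_sup_right (smul_mem _ c (mem_span_singleton_self p)))
  refine ⟨U ⊔ F ∙ (v + c • p), sup_le (fun u hu => ?_) ((span_singleton_le_iff_mem _ _).2 hcp),
    hU.sup_span_singleton hc hcU, finrank_sup_span_singleton hcU'⟩
  exact mem_perp_span_singleton.2 ((polar_comm Q p u).trans (hpU u hu))

lemma Nondeg.polarBilin_nondegenerate (hnd : Nondeg Q) (hw : HasWittIndex Q n)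
    (hV : finrank F V = 2 * n + 2) : Q.polarBilin.Nondegenerate := by
  suffices hrad : ∀ r, (∀ v, polar Q r v = 0) → r = 0 from
    ⟨hrad, fun r hr => hrad r fun v => (polar_comm Q r v).trans (hr v)⟩
  intro r hr
  by_contra hr0
  have hQr : Q r ≠ 0 := fun h => hr0 (hnd r h hr)
  obtain ⟨W, hW, hWn⟩ := hw.2
  have hperp : perp Q (W ⊔ F ∙ r) = perp Q W := by
    ext v
    rw [mem_perp_sup_span_singleton, and_iff_left (hr v)]
  have hdim := hW.finrank_add_finrank_perp hnd
  obtain ⟨W', -, hW', hW'n⟩ := hW.exists_finrank_eq_succ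
    (fun w _ => (polar_comm Q w r).trans (hr w)) hQr (by rw [hperp]; lia)
  have := hw.1 W' hW'
  lia

end NonsingularPoint

section Restrict

variable {Q : QuadraticForm F V} {S : Submodule F V} {U : Submodule F S} {n : ℕ}

lemma totallySingular_restrict :
    TotallySingular (Q.restrict S) U ↔ TotallySingular Q (U.map S.subtype) :=
  ⟨fun h => by rintro _ ⟨v, hv, rfl⟩; exact h v hv, fun h v hv => h v (mem_map_of_mem hv)⟩

lemma isGenerator_restrict :
    IsGenerator (Q.restrict S) n U ↔ IsGenerator Q n (U.map S.subtype) :=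
  and_congr totallySingular_restrict (by rw [finrank_map_subtype_eq])

lemma sum_singularVectors_restrict [Fintype V] [Fintype S] (f : V → ℤ) :
    ∑ v ∈ singularVectors (Q.restrict S) U, f v =
      ∑ v ∈ singularVectors Q (U.map S.subtype), f v := by
  refine sum_nbij (fun v => (v : V)) (fun v hv => ?_) Subtype.val_injective.injOn
    (fun v hv => ?_) fun _ _ => rfl
  · rw [mem_singularVectors] at hv ⊢
    exact ⟨mem_map_of_mem hv.1, hv.2⟩
  · obtain ⟨⟨u, hu, rfl⟩, hQ⟩ := mem_singularVectors.1 hv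
    exact ⟨u, mem_singularVectors.2 ⟨hu, hQ⟩, rfl⟩

end Restrict

section ParabolicSection

variable [FiniteDimensional F V] {Q : QuadraticForm F V} {p : V} {n : ℕ}

lemma finrank_inf_add_one_of_not_le {H W : Submodule F V} (hH : finrank F H + 1 = finrank F V)
    (hW : ¬ W ≤ H) : finrank F ↥(W ⊓ H) + 1 = finrank F W := by
  have hlt := finrank_lt_finrank_of_lt (inf_lt_left.2 hW)
  have hsum := finrank_sup_add_finrank_inf_eq W H
  have hle := (W ⊔ H).finrank_le
  lia

lemma finrank_perp_span_singleton (hB : Q.polarBilin.Nondegenerate) (hp : p ≠ 0) :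
    finrank F (perp Q (F ∙ p)) + 1 = finrank F V := by
  rw [LinearMap.BilinForm.finrank_orthogonal hB, finrank_span_singleton hp]
  have := (F ∙ p).finrank_le
  rw [finrank_span_singleton hp] at this
  lia

lemma exists_eq_perp_span_singleton (hB : Q.polarBilin.Nondegenerate) {K : Submodule F V}
    (hK : finrank F K + 1 = finrank F V) : ∃ p ≠ 0, K = perp Q (F ∙ p) := by
  have hdim : finrank F (perp Q K) = 1 := by
    rw [LinearMap.BilinForm.finrank_orthogonal hB]
    lia
  obtain ⟨p, hp, hspan⟩ := finrank_eq_one_iff'.1 hdim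
  refine ⟨p, by simpa using hp, ?_⟩
  have hline : perp Q K = F ∙ (p : V) := by
    refine le_antisymm (fun v hv => ?_) ((span_singleton_le_iff_mem _ _).2 p.2)
    obtain ⟨c, hc⟩ := hspan ⟨v, hv⟩
    exact mem_span_singleton.2 ⟨c, congrArg Subtype.val hc⟩
  rw [← hline, perp, perp, LinearMap.BilinForm.orthogonal_orthogonal hB (polarBilin_isRefl Q)]

lemma nondeg_restrict_perp_span_singleton (hB : Q.polarBilin.Nondegenerate) (hp : Q p ≠ 0) :
    Nondeg (Q.restrict (perp Q (F ∙ p))) := by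
  rintro ⟨v, hv⟩ hQv hpolar
  have hmem : v ∈ perp Q (perp Q (F ∙ p)) := fun w hw =>
    (polar_comm Q w v).trans (hpolar ⟨w, hw⟩)
  rw [perp, LinearMap.BilinForm.orthogonal_orthogonal hB (polarBilin_isRefl Q)] at hmem
  obtain ⟨c, rfl⟩ := mem_span_singleton.1 hmem
  have hc : c * c * Q p = 0 := (QuadraticMap.map_smul Q c p).symm.trans hQv
  have hc0 : c = 0 := by simpa [hp] using hc
  simp [hc0]

lemma HasWittIndex.restrict_perp_span_singleton [CharP F 2] [PerfectRing F 2]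
    (hB : Q.polarBilin.Nondegenerate) (hw : HasWittIndex Q n) (hV : finrank F V = 2 * n + 2)
    (hp : Q p ≠ 0) : HasWittIndex (Q.restrict (perp Q (F ∙ p))) n := by
  suffices hgen : ∃ W ≤ perp Q (F ∙ p), IsGenerator Q n W by
    obtain ⟨W, hWp, hW⟩ := hgen
    refine ⟨fun U hU => ?_, W.comap (perp Q (F ∙ p)).subtype, isGenerator_restrict.2 ?_⟩
    · rw [← finrank_map_subtype_eq]
      exact hw.1 _ (totallySingular_restrict.1 hU)
    · rwa [map_comap_subtype, inf_eq_right.2 hWp]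
  obtain ⟨W, hW, hWn⟩ := hw.2
  by_cases hWp : W ≤ perp Q (F ∙ p)
  · exact ⟨W, hWp, hW, hWn⟩
  have hp0 : p ≠ 0 := by
    rintro rfl
    exact hp (QuadraticMap.map_zero Q)
  have hdim := finrank_inf_add_one_of_not_le (finrank_perp_span_singleton hB hp0) hWp
  generalize hUW : W ⊓ perp Q (F ∙ p) = U at hdim
  have hU : TotallySingular Q U := fun v hv => hW v (hUW.ge hv).1
  have hpU : p ∈ perp Q U := fun u hu =>
    (polar_comm Q u p).trans (mem_perp_span_singleton.1 (hUW.ge hu).2)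
  obtain ⟨W', hW'p, hW', hW'n⟩ := hU.exists_finrank_eq_succ hpU hp <| by
    rw [LinearMap.BilinForm.finrank_orthogonal hB,
      finrank_sup_span_singleton fun h => hp (hU p h)]
    lia
  exact ⟨W', hW'p, hW', hW'n.trans (hdim.trans hWn)⟩

end ParabolicSection

section EllipticQuadric

variable [Fintype F] [Fintype V] {Q : QuadraticForm F V} {p : V} {n : ℕ} {κ : ℤ} {f : V → ℤ}

local notation "𝔮" => (Fintype.card F : ℤ)

lemma sum_singularVectors_perp_span_singleton_of_eq_zero (hnd : Nondeg Q)
    (hw : HasWittIndex Q n) (hV : finrank F V = 2 * n + 2)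
    (hf : ∀ g, IsGenerator Q n g → ∑ v ∈ singularVectors Q g, f v = κ)
    (hp0 : p ≠ 0) (hp : Q p = 0) :
    ∑ v ∈ singularVectors Q (perp Q (F ∙ p)), f v +
      𝔮 ^ n * ∑ v ∈ singularVectors Q (F ∙ p), f v = (𝔮 ^ n + 1) * κ := by
  have hTS := totallySingular_span_singleton hp
  have hdim : finrank F (F ∙ p) = 1 := finrank_span_singleton hp0
  obtain ⟨j, rfl⟩ := Nat.exists_eq_add_of_le' (hdim.symm.trans_le (hw.1 _ hTS))
  exact hTS.sum_singularVectors_perp (d := 1) hnd hw hV hf (by lia)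

lemma sum_singularVectors_perp_span_singleton_of_ne_zero [CharP F 2]
    (hB : Q.polarBilin.Nondegenerate) (hw : HasWittIndex Q n) (hV : finrank F V = 2 * n + 2)
    (hf : ∀ g, IsGenerator Q n g → ∑ v ∈ singularVectors Q g, f v = κ) (hp : Q p ≠ 0) :
    ∑ v ∈ singularVectors Q (perp Q (F ∙ p)), f v +
      𝔮 ^ n * ∑ v ∈ singularVectors Q (F ∙ p), f v = (𝔮 ^ n + 1) * κ := by
  classical
  have hp0 : p ≠ 0 := by
    rintro rfl
    exact hp (QuadraticMap.map_zero Q)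
  have hdim : finrank F (perp Q (F ∙ p)) = 2 * n + 0 + 1 := by
    have := finrank_perp_span_singleton hB hp0
    lia
  have hspan : singularVectors Q (F ∙ p) = singularVectors Q ⊥ := by
    refine (singularVectors_mono bot_le).antisymm' fun v hv => ?_
    obtain ⟨hv, hQv⟩ := mem_singularVectors.1 hv
    obtain ⟨c, rfl⟩ := mem_span_singleton.1 hv
    have hc : c = 0 := by simpa [QuadraticMap.map_smul, hp] using hQv
    simp [hc]
  have hsections (g : Submodule F (perp Q (F ∙ p)))
      (hg : IsGenerator (Q.restrict (perp Q (F ∙ p))) n g) :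
      ∑ v ∈ singularVectors (Q.restrict (perp Q (F ∙ p))) g, f v = κ :=
    (sum_singularVectors_restrict f).trans (hf _ (isGenerator_restrict.1 hg))
  have h := (totallySingular_bot _).sum_singularVectors_perp (d := 0) (j := n)
    (nondeg_restrict_perp_span_singleton hB hp) (hw.restrict_perp_span_singleton hB hV hp) hdim
    hsections (by simp)
  rwa [perp_bot, sum_singularVectors_restrict,
    sum_singularVectors_restrict, map_subtype_top, Submodule.map_bot, ← hspan] at h

theorem sum_singularVectors_perp_span_singleton [CharP F 2] (hB : Q.polarBilin.Nondegenerate)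
    (hw : HasWittIndex Q n) (hV : finrank F V = 2 * n + 2)
    (hf : ∀ g, IsGenerator Q n g → ∑ v ∈ singularVectors Q g, f v = κ) (hp : p ≠ 0) :
    ∑ v ∈ singularVectors Q (perp Q (F ∙ p)), f v +
      𝔮 ^ n * ∑ v ∈ singularVectors Q (F ∙ p), f v = (𝔮 ^ n + 1) * κ := by
  have hnd : Nondeg Q := fun v _ hv => hB.1 v hv
  by_cases hQp : Q p = 0
  · exact sum_singularVectors_perp_span_singleton_of_eq_zero hnd hw hV hf hp hQp
  · exact sum_singularVectors_perp_span_singleton_of_ne_zero hB hw hV hf hQp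

end EllipticQuadric

section PointCounting

variable {Q : QuadraticForm F V} {P U H K : Submodule F V} {v : V}

/-- The set of singular points of `Q` contained in the subspace `U`. -/
def singularPoints (Q : QuadraticForm F V) (U : Submodule F V) : Set (Submodule F V) :=
  {P | IsSingularPoint Q P ∧ P ≤ U}

lemma IsSingularPoint.finrank_eq_one (hP : IsSingularPoint Q P) : finrank F P = 1 := by
  obtain ⟨v, hv, -, rfl⟩ := hP
  exact finrank_span_singleton hv

lemma IsSingularPoint.totallySingular (hP : IsSingularPoint Q P) : TotallySingular Q P := by
  obtain ⟨v, -, hv, rfl⟩ := hP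
  exact totallySingular_span_singleton hv

lemma isSingularPoint_span_singleton_iff : IsSingularPoint Q (F ∙ v) ↔ v ≠ 0 ∧ Q v = 0 := by
  refine ⟨fun h => ⟨?_, h.totallySingular v (mem_span_singleton_self v)⟩,
    fun h => ⟨v, h.1, h.2, rfl⟩⟩
  rintro rfl
  have h1 := h.finrank_eq_one
  rw [span_zero_singleton, finrank_bot] at h1
  exact zero_ne_one h1

lemma span_singleton_eq_iff_of_finrank_eq_one (hP : finrank F P = 1) :
    F ∙ v = P ↔ v ∈ P ∧ v ≠ 0 := by
  have : FiniteDimensional F P := FiniteDimensional.of_finrank_pos (by lia)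
  constructor
  · rintro rfl
    refine ⟨mem_span_singleton_self v, ?_⟩
    rintro rfl
    rw [span_zero_singleton, finrank_bot] at hP
    exact zero_ne_one hP
  · rintro ⟨hv, hv0⟩
    exact eq_of_le_of_finrank_eq ((span_singleton_le_iff_mem v P).2 hv)
      (by rw [hP, finrank_span_singleton hv0])

lemma sep_le_singularPoints :
    {P ∈ singularPoints Q H | P ≤ K} = singularPoints Q (K ⊓ H) := by
  ext P
  simp only [singularPoints, Set.mem_ofPred_eq, le_inf_iff]
  tauto

lemma ncard_sep_le_span_singleton_le_one {Y : Set (Submodule F V)}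
    (hY : ∀ P ∈ Y, finrank F P = 1) (p : V) : {P ∈ Y | P ≤ F ∙ p}.ncard ≤ 1 := by
  have hsub : {P ∈ Y | P ≤ F ∙ p} ⊆ {F ∙ p} := fun P hP =>
    eq_of_le_of_finrank_le hP.2 ((finrank_span_le_card {p}).trans (by simp [hY P hP.1]))
  simpa using Set.ncard_le_ncard hsub

variable [Fintype F] [Fintype V]

open Classical in
lemma card_filter_span_singleton_eq (hP : finrank F P = 1) :
    #{v : V | F ∙ v = P} = Fintype.card F - 1 := by
  simp only [span_singleton_eq_iff_of_finrank_eq_one hP]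
  rw [filter_and_not, filter_eq' _ (0 : V), if_pos (mem_univ _), card_sdiff_of_subset (by simp),
    card_singleton, ← Fintype.card_subtype, Module.card_eq_pow_finrank (K := F) (V := P), hP,
    pow_one]

open Classical in
lemma card_filter_span_singleton_mem {Y : Set (Submodule F V)} (hY : ∀ P ∈ Y, finrank F P = 1) :
    #{v : V | F ∙ v ∈ Y} = (Fintype.card F - 1) * Y.ncard := by
  have hfiber (P) (hP : P ∈ Y.toFinite.toFinset) :
      #{v ∈ ({v | F ∙ v ∈ Y} : Finset V) | F ∙ v = P} = Fintype.card F - 1 := by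
    rw [Set.Finite.mem_toFinset] at hP
    rw [← card_filter_span_singleton_eq (hY P hP), filter_filter]
    congr 1 with v
    simp +contextual [hP]
  rw [card_eq_sum_card_fiberwise (f := (F ∙ ·)) (t := Y.toFinite.toFinset) fun v hv => by
      simpa using hv, sum_congr rfl hfiber, sum_const, smul_eq_mul, mul_comm,
    Set.ncard_eq_toFinset_card Y]

lemma card_singularVectors :
    #(singularVectors Q U) = 1 + (Fintype.card F - 1) * (singularPoints Q U).ncard := by
  classical
  rw [← card_filter_span_singleton_mem fun P hP => hP.1.finrank_eq_one, add_comm,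
    ← card_insert_of_notMem (a := (0 : V))]
  · congr 1
    ext v
    by_cases hv : v = 0
    · simp [hv]
    · simp [hv, singularPoints, isSingularPoint_span_singleton_iff, and_comm]
  · simp [singularPoints, isSingularPoint_span_singleton_iff, -span_zero_singleton]

end PointCounting

section HemisystemWeight

variable {Q : QuadraticForm F V} {H : Submodule F V} {A : Set (Submodule F V)} {n m : ℕ} {p : V}

open Classical in
/-- The weight of a singular vector attached to a relative hemisystem `A` with respect to `H`: `1`
on `H`, `2` on the points of `A` and `0` on the remaining points off `H`. It makes every generator,
whether contained in `H` or not, have total weight `qⁿ`. -/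
def hemisystemWeight (H : Submodule F V) (A : Set (Submodule F V)) (v : V) : ℤ :=
  (if F ∙ v ∈ A then 2 else 0) + if v ∈ H then 1 else 0

variable [Fintype F] [Fintype V]

local notation "𝔮" => (Fintype.card F : ℤ)

lemma sum_hemisystemWeight (hA : ∀ P ∈ A, IsSingularPoint Q P) (K : Submodule F V) :
    ∑ v ∈ singularVectors Q K, hemisystemWeight H A v =
      2 * ((𝔮 - 1) * {P ∈ A | P ≤ K}.ncard) + #(singularVectors Q (K ⊓ H)) := by
  classical
  have hpoints : #{v ∈ singularVectors Q K | F ∙ v ∈ A} =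
      (Fintype.card F - 1) * {P ∈ A | P ≤ K}.ncard := by
    rw [← card_filter_span_singleton_mem fun P hP => (hA P hP.1).finrank_eq_one]
    congr 1 with v
    have hQv := fun h => (isSingularPoint_span_singleton_iff.1 (hA (F ∙ v) h)).2
    simp only [mem_filter, mem_singularVectors, mem_univ, true_and, Set.mem_ofPred_eq,
      span_singleton_le_iff_mem]
    tauto
  have hsection : (singularVectors Q K).filter (· ∈ H) = singularVectors Q (K ⊓ H) := by
    ext v
    simp only [mem_filter, mem_singularVectors, Submodule.mem_inf]
    tauto
  simp only [hemisystemWeight, sum_add_distrib, ← sum_filter, sum_const, hpoints, hsection,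
    nsmul_eq_mul, mul_one]
  rw [Nat.cast_mul, Nat.cast_pred Fintype.card_pos, mul_comm]

lemma IsRelativeMOvoid.sum_hemisystemWeight_of_isGenerator
    (hA : IsRelativeMOvoid Q n H m A) (hm : 2 * m = Fintype.card F ^ (n - 1))
    (hH : finrank F H + 1 = finrank F V) {g : Submodule F V} (hg : IsGenerator Q n g) :
    ∑ v ∈ singularVectors Q g, hemisystemWeight H A v = 𝔮 ^ n := by
  have hTS : TotallySingular Q (g ⊓ H) := fun v hv => hg.1 v hv.1
  rw [sum_hemisystemWeight fun P hP => (hA.1 P hP).1, hTS.card_singularVectors]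
  by_cases hgH : g ≤ H
  · have hempty : {P ∈ A | P ≤ g} = ∅ :=
      Set.eq_empty_of_forall_notMem fun P hP => (hA.1 P hP.1).2 (hP.2.trans hgH)
    rw [hempty, inf_eq_left.2 hgH, hg.2]
    simp
  · have hdim := finrank_inf_add_one_of_not_le hH hgH
    obtain rfl : finrank F ↥(g ⊓ H) + 1 = n := hdim.trans hg.2
    rw [hA.2 g hg hgH]
    zify [Nat.add_sub_cancel] at hm
    push_cast
    linear_combination (𝔮 - 1) * hm

theorem IsRelativeMOvoid.sum_hemisystemWeight_perp [CharP F 2]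
    (hA : IsRelativeMOvoid Q n H m A) (hm : 2 * m = Fintype.card F ^ (n - 1))
    (hH : finrank F H + 1 = finrank F V) (hB : Q.polarBilin.Nondegenerate)
    (hw : HasWittIndex Q n) (hV : finrank F V = 2 * n + 2) (hp : p ≠ 0) :
    ∑ v ∈ singularVectors Q (perp Q (F ∙ p)), hemisystemWeight H A v +
      𝔮 ^ n * ∑ v ∈ singularVectors Q (F ∙ p), hemisystemWeight H A v = (𝔮 ^ n + 1) * 𝔮 ^ n :=
  sum_singularVectors_perp_span_singleton hB hw hV
    (fun _ hg => hA.sum_hemisystemWeight_of_isGenerator hm hH hg) hp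

end HemisystemWeight

section Pencil

variable {Q : QuadraticForm F V} {l : V →ₗ[F] F} {s t : F} {A A' : Set (Submodule F V)}
  {n m : ℕ}

/-- The member `Q_s = Q + s l²` of the pencil of quadratic forms that agree with `Q` on `ker l`. -/
abbrev pencil (Q : QuadraticForm F V) (l : V →ₗ[F] F) (s : F) : QuadraticForm F V :=
  Q + s • linMulLin l l

/-- The set `A ∪ A' ∪ 𝒬`, where `𝒬` is the set of singular points in `ker l`, which all members of
the pencil share. -/
abbrev gluedSet (Q : QuadraticForm F V) (l : V →ₗ[F] F) (A A' : Set (Submodule F V)) :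
    Set (Submodule F V) :=
  A ∪ A' ∪ singularPoints Q (LinearMap.ker l)

lemma polarBilin_pencil [CharP F 2] (Q : QuadraticForm F V) (l : V →ₗ[F] F) (s : F) :
    (pencil Q l s).polarBilin = Q.polarBilin := by
  ext x y
  simp only [polarBilin_apply_apply, polar, add_apply, smul_apply, linMulLin_apply, map_add,
    smul_eq_mul]
  linear_combination s * l x * l y * CharTwo.two_eq_zero (R := F)

lemma singularVectors_pencil_inf_ker [Fintype V] (Q : QuadraticForm F V) (l : V →ₗ[F] F) (s : F)
    (K : Submodule F V) : singularVectors (pencil Q l s) (K ⊓ LinearMap.ker l) =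
      singularVectors Q (K ⊓ LinearMap.ker l) := by
  ext v
  simp +contextual

lemma IsRelativeMOvoid.disjoint_pencil (hst : s ≠ t)
    (hA : IsRelativeMOvoid (pencil Q l s) n (LinearMap.ker l) m A)
    (hA' : IsRelativeMOvoid (pencil Q l t) n (LinearMap.ker l) m A') : Disjoint A A' := by
  refine Set.disjoint_left.2 fun P hP hP' => (hA.1 P hP).2 fun v hv => ?_
  have hs : Q v + s * (l v * l v) = 0 := (hA.1 P hP).1.totallySingular v hv
  have ht : Q v + t * (l v * l v) = 0 := (hA'.1 P hP').1.totallySingular v hv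
  have hprod : (s - t) * (l v * l v) = 0 := by linear_combination hs - ht
  simpa [sub_ne_zero.2 hst] using hprod

lemma ncard_sep_union [Finite V] {Y Z : Set (Submodule F V)} (h : Disjoint Y Z)
    (K : Submodule F V) :
    {P ∈ Y ∪ Z | P ≤ K}.ncard = {P ∈ Y | P ≤ K}.ncard + {P ∈ Z | P ≤ K}.ncard := by
  rw [← Set.ncard_union_eq (h.mono (Set.sep_subset _ _) (Set.sep_subset _ _))]
  congr 1 with P
  simp [or_and_right]

variable [Fintype F] [Fintype V]

local notation "𝔮" => (Fintype.card F : ℤ)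

lemma sum_hemisystemWeight_add_sum_hemisystemWeight (hst : s ≠ t)
    (hA : IsRelativeMOvoid (pencil Q l s) n (LinearMap.ker l) m A)
    (hA' : IsRelativeMOvoid (pencil Q l t) n (LinearMap.ker l) m A') (K : Submodule F V) :
    ∑ v ∈ singularVectors (pencil Q l s) K, hemisystemWeight (LinearMap.ker l) A v +
      ∑ v ∈ singularVectors (pencil Q l t) K, hemisystemWeight (LinearMap.ker l) A' v =
      2 + 2 * ((𝔮 - 1) * {P ∈ gluedSet Q l A A' | P ≤ K}.ncard) := by
  have hdisj : Disjoint (A ∪ A') (singularPoints Q (LinearMap.ker l)) :=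
    Set.disjoint_left.2 fun P hP hPl =>
      hP.elim (fun h => (hA.1 P h).2 hPl.2) fun h => (hA'.1 P h).2 hPl.2
  rw [sum_hemisystemWeight fun P hP => (hA.1 P hP).1,
    sum_hemisystemWeight fun P hP => (hA'.1 P hP).1, singularVectors_pencil_inf_ker,
    singularVectors_pencil_inf_ker, ncard_sep_union hdisj,
    ncard_sep_union (hA.disjoint_pencil hst hA'), sep_le_singularPoints, card_singularVectors]
  push_cast [Nat.cast_pred Fintype.card_pos]
  ring

end Pencil

section Gluing

variable [Fintype F] [Finite V] [CharP F 2] {Q : QuadraticForm F V} {l : V →ₗ[F] F} {s t : F}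
  {A A' : Set (Submodule F V)} {n m : ℕ} {p : V}

theorem ncard_gluedSet_perp (hst : s ≠ t)
    (hA : IsRelativeMOvoid (pencil Q l s) n (LinearMap.ker l) m A)
    (hA' : IsRelativeMOvoid (pencil Q l t) n (LinearMap.ker l) m A')
    (hm : 2 * m = Fintype.card F ^ (n - 1)) (hl : l ≠ 0) (hB : Q.polarBilin.Nondegenerate)
    (hws : HasWittIndex (pencil Q l s) n) (hwt : HasWittIndex (pencil Q l t) n)
    (hV : finrank F V = 2 * n + 2) (hp : p ≠ 0) :
    (Fintype.card F - 1) * ({P ∈ gluedSet Q l A A' | P ≤ perp Q (F ∙ p)}.ncard +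
      Fintype.card F ^ n * {P ∈ gluedSet Q l A A' | P ≤ F ∙ p}.ncard) =
      Fintype.card F ^ (2 * n) - 1 := by
  have : Fintype V := Fintype.ofFinite V
  have hH := Module.Dual.finrank_ker_add_one_of_ne_zero hl
  have hs := hA.sum_hemisystemWeight_perp hm hH (by rwa [polarBilin_pencil]) hws hV hp
  have ht := hA'.sum_hemisystemWeight_perp hm hH (by rwa [polarBilin_pencil]) hwt hV hp
  rw [perp, polarBilin_pencil] at hs ht
  have hperp := sum_hemisystemWeight_add_sum_hemisystemWeight hst hA hA' (perp Q (F ∙ p))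
  have hline := sum_hemisystemWeight_add_sum_hemisystemWeight hst hA hA' (F ∙ p)
  have hq := Fintype.card_pos (α := F)
  zify [hq, Nat.one_le_pow (2 * n) _ hq]
  refine mul_left_cancel₀ (two_ne_zero (α := ℤ)) ?_
  linear_combination hs + ht - hperp - (Fintype.card F : ℤ) ^ n * hline

end Gluing

/-- The set `X = A ∪ A' ∪ 𝒬` obtained by gluing relative hemisystems of two elliptic
quadrics of the pencil through `𝒬` is a two-character set with the same hyperplane
intersection numbers as an elliptic quadric `Q⁻(2n+1,q)` (an elliptic quasi-quadric):
every hyperplane meets it in `(q^{2n} − 1)/(q − 1)` or `(q^{2n} − 1)/(q − 1) − qⁿ`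
points. -/
theorem statement_15
    (q n : ℕ) [Fintype F] (hq : Fintype.card F = q) (hq2 : Even q) (hn : 2 ≤ n)
    (hV : finrank F V = 2 * n + 2)
    (Q : QuadraticForm F V) (hQnd : Nondeg Q) (hQw : HasWittIndex Q n)
    (l : V →ₗ[F] F) (hl : l ≠ 0) (hHnd : NondegOn Q (LinearMap.ker l))
    (s t : F) (hst : s ≠ t)
    (hWs : HasWittIndex (Q + s • QuadraticMap.linMulLin l l) n)
    (hWt : HasWittIndex (Q + t • QuadraticMap.linMulLin l l) n)
    (A Aa : Set (Submodule F V))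
    (hA : IsRelHemisystemOf (Q + s • QuadraticMap.linMulLin l l) q n (LinearMap.ker l) A)
    (hAa : IsRelHemisystemOf (Q + t • QuadraticMap.linMulLin l l) q n (LinearMap.ker l) Aa)
    (X : Set (Submodule F V))
    (hX : X = A ∪ Aa ∪
      {P : Submodule F V | IsSingularPoint Q P ∧ P ≤ LinearMap.ker l}) :
    ∀ K : Submodule F V, finrank F K = 2 * n + 1 →
      {P ∈ X | P ≤ K}.ncard = (q ^ (2 * n) - 1) / (q - 1) ∨
      {P ∈ X | P ≤ K}.ncard = (q ^ (2 * n) - 1) / (q - 1) - q ^ n := by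
  subst hq hX
  have : FiniteDimensional F V := FiniteDimensional.of_finrank_pos (by lia)
  have : Finite V := Module.finite_of_finite F
  have : CharP F 2 := ringChar.of_eq (FiniteField.even_card_iff_char_two.2 (Nat.even_iff.1 hq2))
  have hB := hQnd.polarBilin_nondegenerate hQw hV
  have hm : 2 * (Fintype.card F ^ (n - 1) / 2) = Fintype.card F ^ (n - 1) :=
    Nat.two_mul_div_two_of_even (hq2.pow_of_ne_zero (by lia))
  have hpoint : ∀ P ∈ gluedSet Q l A Aa, finrank F P = 1 := by
    rintro P ((hP | hP) | hP)
    exacts [(hA.1.1 P hP).1.finrank_eq_one, (hAa.1.1 P hP).1.finrank_eq_one, hP.1.finrank_eq_one]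
  intro K hK
  obtain ⟨p, hp, rfl⟩ := exists_eq_perp_span_singleton hB (K := K) (by lia)
  have hdual := ncard_gluedSet_perp hst hA.1 hAa.1 hm hl hB hWs hWt hV hp
  have hcount := Nat.eq_div_of_mul_eq_right (Nat.sub_pos_of_lt Fintype.one_lt_card).ne' hdual
  rcases Nat.le_one_iff_eq_zero_or_eq_one.1 (ncard_sep_le_span_singleton_le_one hpoint p) with h | h
  · left
    rwa [h, mul_zero, add_zero] at hcount
  · right
    rw [h, mul_one] at hcount
    exact Nat.eq_sub_of_add_eq hcount
end
end

section
/- Let Λ ≤ H be a 4-dimensional subspace such that the restriction of Q to Λ is nondegenerate of Witt index 1 (so the singular points in Λ form an elliptic quadric Q⁻(3,q)), and let H' ≠ H be another hyperplane of V containing Λ such that the restriction of Q to H' is nondegenerate. Then the set S of singular points contained in H' but not in Λ is a relative q-ovoid of Q⁺(5,q) with respect to 𝒬: every generator of Q⁺(5,q) not contained in H contains exactly q points of S. In particular, for q > 2 there exist proper relative m-ovoids of the hyperbolic quadric Q⁺(5,q) with respect to a parabolic section that are not relative hemisystems (since q ≠ q²/2), so the analogue of the main theorem on relative m-ovoids of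 elliptic quadrics fails for hyperbolic quadrics. -/
noncomputable section

open Module

variable {F V : Type*} [Field F] [AddCommGroup V] [Module F V]

/-- The restriction of `Q` to the subspace `U` has Witt index `k`. -/
def HasWittIndexOn (Q : QuadraticForm F V) (U : Submodule F V) (k : ℕ) : Prop :=
  (∀ W : Submodule F V, W ≤ U → TotallySingular Q W → finrank F W ≤ k) ∧
  ∃ W : Submodule F V, W ≤ U ∧ TotallySingular Q W ∧ finrank F W = k

/-!
Let `g` be a generator of dimension `n + 2` and let `Λ` have codimension `2` and Witt index `n`.
Then `g ⊓ Λ` has dimension exactly `n`, so `g` lies in neither `H` nor `H'`. The points of `g` in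
`H'` but not in `Λ` are those of `g ⊓ H'` off its hyperplane `g ⊓ Λ`, and there are `q ^ n` of
them; those not in `H` number `q ^ (n + 1)`. Thus `S` and its complement are relative ovoids with
parameters `q ^ n` and `q ^ (n + 1) - q ^ n`, which differ unless `q = 2`.

Reflections act transitively on nonzero singular vectors, so every singular point lies on the same
number of generators. Double counting incident pairs then shows that two relative ovoids of the
same size have the same parameter, so `S` is not a relative hemisystem when `q > 2`.
-/

open QuadraticMap (polar)

section Counting

variable {U W : Submodule F V}

lemma covBy_of_finrank_eq_add_one [FiniteDimensional F V] (hUW : U ≤ W)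
    (hd : finrank F W = finrank F U + 1) : U ⋖ W := by
  refine ⟨lt_of_le_of_ne hUW fun h ↦ ?_, fun X hUX hXW ↦ ?_⟩
  · rw [h] at hd
    omega
  · have := Submodule.finrank_lt_finrank_of_lt hUX
    have := Submodule.finrank_lt_finrank_of_lt hXW
    omega

lemma injOn_span_singleton_add {w : V} (hw : w ∉ U) :
    Set.InjOn (fun u ↦ F ∙ (w + u)) (U : Set V) := by
  intro u hu u' hu' heq
  obtain ⟨c, hc⟩ := Submodule.mem_span_singleton.1
    ((Submodule.span_singleton_le_iff_mem _ _).1 (le_of_eq heq))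
  have hsub : (c - 1) • w = u - c • u' := by
    rw [sub_smul, one_smul, sub_eq_sub_iff_add_eq_add, ← smul_add, hc, add_comm]
  have hc1 : c = 1 := by
    by_contra hne
    refine hw ((U.smul_mem_iff (sub_ne_zero.2 hne)).1 ?_)
    rw [hsub]
    exact U.sub_mem hu (U.smul_mem c hu')
  rw [hc1, one_smul] at hc
  exact (add_left_cancel hc).symm

lemma bijOn_span_singleton_add (hUW : U ⋖ W) {w : V} (hwW : w ∈ W) (hwU : w ∉ U) :
    Set.BijOn (fun u ↦ F ∙ (w + u)) (U : Set V) {P | IsAtom P ∧ P ≤ W ∧ ¬ P ≤ U} := by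
  refine ⟨fun u hu ↦ ?_, injOn_span_singleton_add hwU, ?_⟩
  · have hmem : w + u ∉ U := fun h ↦ hwU ((U.add_mem_iff_left hu).1 h)
    have hne : w + u ≠ 0 := fun h ↦ hmem (h ▸ U.zero_mem)
    simp only [Set.mem_ofPred_eq, Submodule.span_singleton_le_iff_mem]
    exact ⟨nonzero_span_atom _ hne, W.add_mem hwW (hUW.le hu), hmem⟩
  · rintro P ⟨hP, hPW, hPU⟩
    obtain ⟨v, -, rfl⟩ := (atom_iff_nonzero_span P).1 hP
    rw [Submodule.span_singleton_le_iff_mem] at hPW hPU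
    have hsup : F ∙ w ⊔ U = W :=
      (hUW.eq_or_eq le_sup_right (sup_le (by simpa using hwW) hUW.le)).resolve_left
        fun h ↦ hwU (h ▸ Submodule.mem_sup_left (Submodule.mem_span_singleton_self w))
    obtain ⟨y, hy, u, hu, rfl⟩ := Submodule.mem_sup.1 (hsup ▸ hPW)
    obtain ⟨c, rfl⟩ := Submodule.mem_span_singleton.1 hy
    have hc : c ≠ 0 := by
      rintro rfl
      exact hPU (by simpa using hu)
    refine ⟨c⁻¹ • u, U.smul_mem _ hu, ?_⟩
    dsimp only
    rw [← Submodule.span_singleton_smul_eq (IsUnit.mk0 c hc), smul_add, smul_inv_smul₀ hc]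

lemma ncard_atoms_of_covBy (hUW : U ⋖ W) :
    {P : Submodule F V | IsAtom P ∧ P ≤ W ∧ ¬ P ≤ U}.ncard = Nat.card U := by
  obtain ⟨w, hwW, hwU⟩ := SetLike.exists_of_lt hUW.lt
  exact (bijOn_span_singleton_add hUW hwW hwU).ncard_eq.symm

lemma TotallySingular.mono {Q : QuadraticForm F V} (hW : TotallySingular Q W) (hUW : U ≤ W) :
    TotallySingular Q U :=
  fun v hv ↦ hW v (hUW hv)

lemma TotallySingular.isSingularPoint_iff_isAtom {Q : QuadraticForm F V}
    (hW : TotallySingular Q W) {P : Submodule F V} (hPW : P ≤ W) :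
    IsSingularPoint Q P ↔ IsAtom P := by
  rw [atom_iff_nonzero_span]
  refine exists_congr fun v ↦ and_congr_right fun _ ↦ and_iff_right_of_imp ?_
  rintro rfl
  exact hW v (hPW (Submodule.mem_span_singleton_self v))

lemma TotallySingular.ncard_singularPoints_not_le [FiniteDimensional F V] {Q : QuadraticForm F V}
    (hW : TotallySingular Q W) (hUW : U ≤ W) (hd : finrank F W = finrank F U + 1) :
    {P | IsSingularPoint Q P ∧ P ≤ W ∧ ¬ P ≤ U}.ncard = Nat.card F ^ finrank F U := by
  rw [← Module.natCard_eq_pow_finrank, ← ncard_atoms_of_covBy (covBy_of_finrank_eq_add_one hUW hd)]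
  congr! 3 with P
  exact and_congr_left fun h ↦ hW.isSingularPoint_iff_isAtom h.1

end Counting

section Dimension

variable [FiniteDimensional F V]

lemma finrank_add_finrank_le_finrank_inf_add {A B C : Submodule F V} (hA : A ≤ C) (hB : B ≤ C) :
    finrank F A + finrank F B ≤ finrank F (A ⊓ B : Submodule F V) + finrank F C := by
  have := Submodule.finrank_sup_add_finrank_inf_eq A B
  have := Submodule.finrank_mono (sup_le hA hB)
  omega

lemma finrank_eq_finrank_inf_add_one {g H : Submodule F V}
    (hH : finrank F H + 1 = finrank F V) (hg : ¬ g ≤ H) :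
    finrank F g = finrank F (g ⊓ H : Submodule F V) + 1 := by
  have hsum := finrank_add_finrank_le_finrank_inf_add (le_top : g ≤ ⊤) (le_top : H ≤ ⊤)
  have hlt := Submodule.finrank_lt_finrank_of_lt (inf_lt_left.2 hg)
  rw [finrank_top] at hsum
  omega

lemma inf_eq_of_finrank_add_one {H H' Λ : Submodule F V} (hne : H' ≠ H)
    (hΛH : Λ ≤ H) (hΛH' : Λ ≤ H') (hH : finrank F H = finrank F Λ + 1)
    (hH' : finrank F H' = finrank F Λ + 1) : H' ⊓ H = Λ := by
  have hlt : H' ⊓ H < H' := inf_lt_left.2 fun hle ↦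
    hne (Submodule.eq_of_le_of_finrank_eq hle (by omega))
  exact ((covBy_of_finrank_eq_add_one hΛH' hH').eq_or_eq (le_inf hΛH' hΛH) hlt.le).resolve_right
    hlt.ne

end Dimension

section Transitivity

variable {Q : QuadraticForm F V}

/-- The reflection `x ↦ x - (B(a, x) / Q(a)) a` in a nonsingular vector `a`, as an isometry of `Q`.
In characteristic `2` it is an orthogonal transvection. -/
def reflectionIsometry (Q : QuadraticForm F V) (a : V) (ha : Q a ≠ 0) : Q.IsometryEquiv Q :=
  { Module.reflection (x := a) (f := (Q a)⁻¹ • Q.polarBilin a) (by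
      simp [QuadraticMap.polar_self, ha, mul_comm]) with
    map_app' := fun x ↦ by
      simp only [AddHom.toFun_eq_coe, LinearMap.coe_toAddHom, LinearEquiv.coe_coe,
        Module.reflection_apply, LinearMap.smul_apply, QuadraticMap.polarBilin_apply_apply,
        sub_eq_add_neg, ← neg_smul, QuadraticMap.map_add Q, QuadraticMap.map_smul,
        QuadraticMap.polar_smul_right, QuadraticMap.polar_comm Q x a, smul_eq_mul]
      field_simp
      ring }

lemma reflectionIsometry_apply {a : V} (ha : Q a ≠ 0) (x : V) :
    reflectionIsometry Q a ha x = x - ((Q a)⁻¹ * polar Q a x) • a :=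
  rfl

lemma reflectionIsometry_sub_apply {u v : V} (huv : Q u = Q v) (ha : Q (u - v) ≠ 0) :
    reflectionIsometry Q (u - v) ha u = v := by
  have hpolar : polar Q (u - v) u = Q (u - v) := by
    rw [sub_eq_add_neg, QuadraticMap.polar_add_left, QuadraticMap.polar_self,
      QuadraticMap.map_add Q, QuadraticMap.map_neg, QuadraticMap.polar_neg_left,
      QuadraticMap.polar_neg_right, QuadraticMap.polar_comm Q v u, huv, two_smul]
  rw [reflectionIsometry_apply, hpolar, inv_mul_cancel₀ ha, one_smul, sub_sub_cancel]

lemma exists_isometryEquiv_apply_eq_of_polar_ne_zero {u v : V} (hu : Q u = 0) (hv : Q v = 0)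
    (huv : polar Q u v ≠ 0) : ∃ e : Q.IsometryEquiv Q, e u = v := by
  have hsub : Q (u - v) ≠ 0 := by
    rwa [sub_eq_add_neg, QuadraticMap.map_add Q, QuadraticMap.map_neg, hu, hv,
      QuadraticMap.polar_neg_right, zero_add, zero_add, neg_ne_zero]
  exact ⟨_, reflectionIsometry_sub_apply (hu.trans hv.symm) hsub⟩

lemma Nondeg.exists_polar_ne_zero (hQ : Nondeg Q) {u : V} (hu0 : u ≠ 0) (hu : Q u = 0) :
    ∃ w, polar Q u w ≠ 0 := by
  by_contra! h
  exact hu0 (hQ u hu h)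

lemma Nondeg.exists_polar_ne_zero_and_polar_ne_zero (hQ : Nondeg Q) {u v : V}
    (hu0 : u ≠ 0) (hu : Q u = 0) (hv0 : v ≠ 0) (hv : Q v = 0) :
    ∃ w, polar Q u w ≠ 0 ∧ polar Q v w ≠ 0 := by
  obtain ⟨x, hx⟩ := hQ.exists_polar_ne_zero hu0 hu
  obtain ⟨y, hy⟩ := hQ.exists_polar_ne_zero hv0 hv
  by_cases hvx : polar Q v x = 0
  · by_cases huy : polar Q u y = 0
    · exact ⟨x + y, by simpa [QuadraticMap.polar_add_right, huy],
        by simpa [QuadraticMap.polar_add_right, hvx]⟩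
    · exact ⟨y, huy, hy⟩
  · exact ⟨x, hx, hvx⟩

lemma Nondeg.exists_singular_polar_ne_zero (hQ : Nondeg Q) {u v : V}
    (hu0 : u ≠ 0) (hu : Q u = 0) (hv0 : v ≠ 0) (hv : Q v = 0) (huv : polar Q u v = 0) :
    ∃ w, Q w = 0 ∧ polar Q u w ≠ 0 ∧ polar Q v w ≠ 0 := by
  obtain ⟨w, huw, hvw⟩ := hQ.exists_polar_ne_zero_and_polar_ne_zero hu0 hu hv0 hv
  -- Adding a multiple of `u` corrects `Q w` without changing `polar Q u w` and `polar Q v w`.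
  refine ⟨w + (-(Q w / polar Q u w)) • u, ?_, ?_, ?_⟩
  · rw [QuadraticMap.map_add Q, QuadraticMap.map_smul, hu, QuadraticMap.polar_smul_right,
      QuadraticMap.polar_comm Q w u, smul_zero, smul_eq_mul, neg_mul, div_mul_cancel₀ _ huw]
    ring
  · simpa [QuadraticMap.polar_add_right, QuadraticMap.polar_smul_right, QuadraticMap.polar_self, hu]
  · simpa [QuadraticMap.polar_add_right, QuadraticMap.polar_smul_right,
      QuadraticMap.polar_comm Q v u, huv]

theorem Nondeg.exists_isometryEquiv_apply_eq (hQ : Nondeg Q) {u v : V}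
    (hu0 : u ≠ 0) (hu : Q u = 0) (hv0 : v ≠ 0) (hv : Q v = 0) :
    ∃ e : Q.IsometryEquiv Q, e u = v := by
  by_cases huv : polar Q u v = 0
  · obtain ⟨w, hw, huw, hvw⟩ := hQ.exists_singular_polar_ne_zero hu0 hu hv0 hv huv
    obtain ⟨e, he⟩ := exists_isometryEquiv_apply_eq_of_polar_ne_zero hu hw huw
    obtain ⟨e', he'⟩ := exists_isometryEquiv_apply_eq_of_polar_ne_zero hw hv
      (QuadraticMap.polar_comm Q v w ▸ hvw)
    exact ⟨e.trans e', (congrArg e' he).trans he'⟩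
  · exact exists_isometryEquiv_apply_eq_of_polar_ne_zero hu hv huv

lemma isGenerator_map_iff (e : Q.IsometryEquiv Q) {n : ℕ} {g : Submodule F V} :
    IsGenerator Q n (g.map e.toLinearEquiv.toLinearMap) ↔ IsGenerator Q n g := by
  have hsing : TotallySingular Q (g.map e.toLinearEquiv.toLinearMap) ↔ TotallySingular Q g :=
    Set.forall_mem_image.trans (forall₂_congr fun v _ ↦ by simp)
  rw [IsGenerator, IsGenerator, hsing, LinearEquiv.finrank_map_eq]

lemma ncard_generators_through_apply (e : Q.IsometryEquiv Q) (n : ℕ) (u : V) :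
    {g | IsGenerator Q n g ∧ F ∙ u ≤ g}.ncard = {g | IsGenerator Q n g ∧ F ∙ e u ≤ g}.ncard := by
  refine Set.ncard_congr' ((Submodule.orderIsoMapComap e.toLinearEquiv).toEquiv.subtypeEquiv ?_)
  intro g
  refine and_congr (isGenerator_map_iff e).symm ?_
  simp only [Submodule.span_singleton_le_iff_mem]
  exact e.toLinearEquiv.injective.mem_set_image.symm

lemma Nondeg.exists_ncard_generators_through_eq (hQ : Nondeg Q) (n : ℕ) :
    ∃ N, ∀ P, IsSingularPoint Q P → {g | IsGenerator Q n g ∧ P ≤ g}.ncard = N := by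
  by_cases h : ∃ u : V, u ≠ 0 ∧ Q u = 0
  · obtain ⟨u, hu0, hu⟩ := h
    refine ⟨{g | IsGenerator Q n g ∧ F ∙ u ≤ g}.ncard, ?_⟩
    rintro _ ⟨v, hv0, hv, rfl⟩
    obtain ⟨e, rfl⟩ := hQ.exists_isometryEquiv_apply_eq hu0 hu hv0 hv
    exact (ncard_generators_through_apply e n u).symm
  · exact ⟨0, fun P ⟨v, hv0, hv, _⟩ ↦ absurd ⟨v, hv0, hv⟩ h⟩

end Transitivity

section RelativeOvoid

variable {Q : QuadraticForm F V} {H : Submodule F V} {n m m' : ℕ} {R R' : Set (Submodule F V)}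

lemma IsRelativeMOvoid.ncard_mul_eq [Finite V] (hR : IsRelativeMOvoid Q n H m R) {N : ℕ}
    (hN : ∀ P, IsSingularPoint Q P → {g | IsGenerator Q n g ∧ P ≤ g}.ncard = N) :
    R.ncard * N = {g | IsGenerator Q n g ∧ ¬ g ≤ H}.ncard * m := by
  classical
  have := Fintype.ofFinite (Submodule F V)
  rw [Set.ncard_eq_toFinset_card', Set.ncard_eq_toFinset_card']
  refine Finset.card_mul_eq_card_mul (· ≤ ·) (fun P hP ↦ ?_) fun g hg ↦ ?_
  · obtain ⟨hPsing, hPH⟩ := hR.1 P (Set.mem_toFinset.1 hP)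
    rw [← hN P hPsing, Set.ncard_eq_toFinset_card']
    congr 1
    ext g
    simp only [Finset.mem_bipartiteAbove, Set.mem_toFinset, Set.mem_ofPred_eq]
    exact ⟨fun h ↦ ⟨h.1.1, h.2⟩, fun h ↦ ⟨⟨h.1, fun hgH ↦ hPH (h.2.trans hgH)⟩, h.2⟩⟩
  · obtain ⟨hgen, hgH⟩ := Set.mem_toFinset.1 hg
    rw [← hR.2 g hgen hgH, Set.ncard_eq_toFinset_card']
    congr 1
    ext P
    simp only [Finset.mem_bipartiteBelow, Set.mem_toFinset, Set.mem_ofPred_eq]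

lemma IsRelativeMOvoid.eq_of_ncard_eq [Finite V] (hQ : Nondeg Q)
    (hR : IsRelativeMOvoid Q n H m R) (hR' : IsRelativeMOvoid Q n H m' R')
    (hgen : ∃ g, IsGenerator Q n g ∧ ¬ g ≤ H) (hcard : R.ncard = R'.ncard) : m = m' := by
  obtain ⟨N, hN⟩ := hQ.exists_ncard_generators_through_eq n
  have hpos : 0 < {g | IsGenerator Q n g ∧ ¬ g ≤ H}.ncard := (Set.ncard_pos).2 hgen
  refine Nat.eq_of_mul_eq_mul_left hpos ?_
  rw [← hR.ncard_mul_eq hN, ← hR'.ncard_mul_eq hN, hcard]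

lemma IsRelativeMOvoid.compl [Finite V] (hH : finrank F H + 1 = finrank F V)
    (hR : IsRelativeMOvoid Q (n + 1) H m R) :
    IsRelativeMOvoid Q (n + 1) H (Nat.card F ^ n - m)
      {P | IsSingularPoint Q P ∧ ¬ P ≤ H ∧ P ∉ R} := by
  refine ⟨fun P hP ↦ ⟨hP.1, hP.2.1⟩, fun g hg hgH ↦ ?_⟩
  have hdim : finrank F g = finrank F (g ⊓ H : Submodule F V) + 1 :=
    finrank_eq_finrank_inf_add_one hH hgH
  have hcount := hg.1.ncard_singularPoints_not_le inf_le_left hdim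
  rw [show finrank F (g ⊓ H : Submodule F V) = n by have := hg.2; omega] at hcount
  rw [← hR.2 g hg hgH, ← hcount, ← Set.ncard_sdiff]
  · congr 1
    ext P
    simp only [Set.mem_ofPred_eq, Set.mem_sdiff, le_inf_iff]
    tauto
  · rintro P ⟨hPR, hPg⟩
    exact ⟨(hR.1 P hPR).1, hPg, fun h ↦ (hR.1 P hPR).2 (h.trans inf_le_right)⟩

end RelativeOvoid

section CodimensionTwo

variable [FiniteDimensional F V] {Q : QuadraticForm F V} {n : ℕ} {g H H' Λ : Submodule F V}

lemma IsGenerator.not_le_of_hasWittIndexOn (hg : IsGenerator Q (n + 2) g)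
    (hΛw : HasWittIndexOn Q Λ n) (hΛH : Λ ≤ H) (hH : finrank F H = finrank F Λ + 1) :
    ¬ g ≤ H := by
  intro hgH
  have hinf := finrank_add_finrank_le_finrank_inf_add hgH hΛH
  have hle := hΛw.1 (g ⊓ Λ) inf_le_right (hg.1.mono inf_le_left)
  have := hg.2
  omega

lemma IsGenerator.finrank_inf_of_hasWittIndexOn (hg : IsGenerator Q (n + 2) g)
    (hΛw : HasWittIndexOn Q Λ n) (hΛ : finrank F Λ + 2 = finrank F V) :
    finrank F (g ⊓ Λ : Submodule F V) = n := by
  have hinf := finrank_add_finrank_le_finrank_inf_add (le_top : g ≤ ⊤) (le_top : Λ ≤ ⊤)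
  have hle := hΛw.1 (g ⊓ Λ) inf_le_right (hg.1.mono inf_le_left)
  have := hg.2
  rw [finrank_top] at hinf
  omega

lemma IsGenerator.ncard_singularPoints_of_hasWittIndexOn (hg : IsGenerator Q (n + 2) g)
    (hΛw : HasWittIndexOn Q Λ n) (hΛH' : Λ ≤ H') (hΛ : finrank F Λ + 2 = finrank F V)
    (hH' : finrank F H' + 1 = finrank F V) :
    {P ∈ {P | IsSingularPoint Q P ∧ P ≤ H' ∧ ¬ P ≤ Λ} | P ≤ g}.ncard = Nat.card F ^ n := by
  have hgΛ := hg.finrank_inf_of_hasWittIndexOn hΛw hΛ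
  have hgH' : finrank F g = finrank F (g ⊓ H' : Submodule F V) + 1 :=
    finrank_eq_finrank_inf_add_one hH' (hg.not_le_of_hasWittIndexOn hΛw hΛH' (by omega))
  have hdim : finrank F (g ⊓ H' : Submodule F V) = finrank F (g ⊓ Λ : Submodule F V) + 1 := by
    have := hg.2
    omega
  rw [← hgΛ, ← (hg.1.mono inf_le_left).ncard_singularPoints_not_le (inf_le_inf_left g hΛH') hdim]
  congr 1
  ext P
  simp only [Set.mem_ofPred_eq, le_inf_iff]
  tauto

theorem isRelativeMOvoid_of_hasWittIndexOn (hH : finrank F H + 1 = finrank F V) (hΛH : Λ ≤ H)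
    (hΛ : finrank F Λ + 2 = finrank F V) (hΛw : HasWittIndexOn Q Λ n) (hne : H' ≠ H)
    (hΛH' : Λ ≤ H') (hH' : finrank F H' + 1 = finrank F V) :
    IsRelativeMOvoid Q (n + 2) H (Nat.card F ^ n)
      {P | IsSingularPoint Q P ∧ P ≤ H' ∧ ¬ P ≤ Λ} := by
  have hinf : H' ⊓ H = Λ := inf_eq_of_finrank_add_one hne hΛH hΛH' (by omega) (by omega)
  exact ⟨fun P ⟨hP, hPH', hPΛ⟩ ↦ ⟨hP, fun hPH ↦ hPΛ (hinf ▸ le_inf hPH' hPH)⟩,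
    fun g hg _ ↦ hg.ncard_singularPoints_of_hasWittIndexOn hΛw hΛH' hΛ hH'⟩

end CodimensionTwo

theorem statement_17_general [Finite F] {n : ℕ} {Q : QuadraticForm F V} (hQ : Nondeg Q)
    (hQw : HasWittIndex Q (n + 2)) {H Λ H' : Submodule F V}
    (hH : finrank F H + 1 = finrank F V) (hΛH : Λ ≤ H) (hΛ : finrank F Λ + 2 = finrank F V)
    (hΛw : HasWittIndexOn Q Λ n) (hne : H' ≠ H) (hΛH' : Λ ≤ H')
    (hH' : finrank F H' + 1 = finrank F V) {S : Set (Submodule F V)}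
    (hS : S = {P | IsSingularPoint Q P ∧ P ≤ H' ∧ ¬ P ≤ Λ}) :
    IsRelativeMOvoid Q (n + 2) H (Nat.card F ^ n) S ∧
    (2 < Nat.card F → S.ncard ≠ {P | IsSingularPoint Q P ∧ ¬ P ≤ H ∧ P ∉ S}.ncard) := by
  have : FiniteDimensional F V := Module.finite_of_finrank_pos (by omega)
  have : Finite V := Module.finite_of_finite F
  have hovoid : IsRelativeMOvoid Q (n + 2) H (Nat.card F ^ n) S :=
    hS ▸ isRelativeMOvoid_of_hasWittIndexOn hH hΛH hΛ hΛw hne hΛH' hH'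
  refine ⟨hovoid, fun hq hcard ↦ ?_⟩
  obtain ⟨g, hg⟩ : ∃ g, IsGenerator Q (n + 2) g := hQw.2
  have hgH : ¬ g ≤ H := hg.not_le_of_hasWittIndexOn hΛw hΛH (by omega)
  have hparam : Nat.card F ^ n = Nat.card F ^ (n + 1) - Nat.card F ^ n :=
    hovoid.eq_of_ncard_eq hQ (hovoid.compl hH) ⟨g, hg, hgH⟩ hcard
  have hlt : Nat.card F ^ n * 2 < Nat.card F ^ n * Nat.card F :=
    Nat.mul_lt_mul_of_pos_left hq (pow_pos (by omega) n)
  rw [pow_succ] at hparam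
  omega

/-- On the hyperbolic quadric `Q⁺(5,q)`, `q` even: if `Λ` cuts `𝒬 = Q ∩ H` in an
elliptic quadric `Q⁻(3,q)` and `H' ≠ H` is another nondegenerate hyperplane through
`Λ`, then the singular points in `H' \ Λ` form a relative `q`-ovoid of `Q⁺(5,q)` with
respect to `𝒬`; for `q > 2` it is not a relative hemisystem, so the analogue of the
main theorem on relative `m`-ovoids of elliptic quadrics fails for hyperbolic quadrics. -/
theorem statement_17
    (q : ℕ) [Fintype F] (hq : Fintype.card F = q) (hq2 : Even q)
    (hV : finrank F V = 6)
    (Q : QuadraticForm F V) (hQnd : Nondeg Q) (hQw : HasWittIndex Q 3)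
    (H : Submodule F V) (hH : finrank F H = 5) (hHnd : NondegOn Q H)
    (Λ : Submodule F V) (hΛH : Λ ≤ H) (hΛdim : finrank F Λ = 4)
    (hΛnd : NondegOn Q Λ) (hΛw : HasWittIndexOn Q Λ 1)
    (H' : Submodule F V) (hne : H' ≠ H) (hΛH' : Λ ≤ H')
    (hH'dim : finrank F H' = 5) (hH'nd : NondegOn Q H')
    (S : Set (Submodule F V))
    (hS : S = {P : Submodule F V | IsSingularPoint Q P ∧ P ≤ H' ∧ ¬ P ≤ Λ}) :
    IsRelativeMOvoid Q 3 H q S ∧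
    (2 < q →
      S.ncard ≠ {P : Submodule F V | IsSingularPoint Q P ∧ ¬ P ≤ H ∧ P ∉ S}.ncard) := by
  subst hq
  simpa using statement_17_general (n := 1) hQnd hQw (by omega) hΛH (by omega) hΛw hne hΛH'
    (by omega) hS
end
end
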